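/- For every ν ∈ (0,1), the relaxation response of the fractional modified Maxwell model, σ(t) = E_ν(−(log(1+t))^ν), is completely monotone on (0,∞): σ is infinitely differentiable on (0,∞) and for every integer n ≥ 0 and every t > 0, (−1)^n · (dⁿσ/dtⁿ)(t) ≥ 0. -/

import Mathlib

open Real Set

/-- The Mittag-Leffler function `E_ν(x) = ∑_{k=0}^∞ x^k / Γ(νk+1)`. -/
noncomputable def mittagLeffler (ν x : ℝ) : ℝ :=
  ∑' k : ℕ, x ^ k / Real.Gamma (ν * k + 1)


open MeasureTheory Filter Topology

/-- Spectral density in logarithmic coordinates. -/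
noncomputable def specK (ν x : ℝ) : ℝ :=
  Real.sin (π * ν) / π * (Real.exp (ν * x) /
    (Real.exp (ν * x) ^ 2 + 2 * Real.exp (ν * x) * Real.cos (π * ν) + 1))

lemma spec_sin_pos {ν : ℝ} (hν : ν ∈ Set.Ioo (0:ℝ) 1) : 0 < Real.sin (π * ν) := by
  apply Real.sin_pos_of_pos_of_lt_pi
  · exact mul_pos Real.pi_pos hν.1
  · nlinarith [Real.pi_pos, hν.2]

lemma spec_den_ge {ν : ℝ} (a : ℝ) :
    Real.sin (π * ν) ^ 2 * (a^2+1) / 2 ≤ a ^ 2 + 2 * a * Real.cos (π * ν) + 1 := by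
  have h := Real.sin_sq_add_cos_sq (π * ν)
  set s := Real.sin (π * ν)
  set c := Real.cos (π * ν)
  have hs : s ^ 2 = 1 - c ^ 2 := by linarith
  rw [hs]
  have hc : c ^ 2 ≤ 1 := by nlinarith [sq_nonneg s]
  nlinarith [sq_nonneg (a + c), sq_nonneg (a * c + 1)]

lemma spec_den_pos {ν : ℝ} (hν : ν ∈ Set.Ioo (0:ℝ) 1) (a : ℝ) :
    0 < a ^ 2 + 2 * a * Real.cos (π * ν) + 1 := by
  refine lt_of_lt_of_le ?_ (spec_den_ge (ν := ν) a)
  have := spec_sin_pos hν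
  positivity

lemma specK_nonneg {ν : ℝ} (hν : ν ∈ Set.Ioo (0:ℝ) 1) (x : ℝ) : 0 ≤ specK ν x := by
  have h1 := spec_sin_pos hν
  have h2 := spec_den_pos hν (Real.exp (ν * x))
  have := Real.pi_pos
  unfold specK
  positivity

lemma specK_cont {ν : ℝ} (hν : ν ∈ Set.Ioo (0:ℝ) 1) : Continuous (specK ν) := by
  unfold specK
  refine continuous_const.mul (Continuous.div (by fun_prop) (by fun_prop) ?_)
  intro x
  exact (spec_den_pos hν _).ne'

lemma spec_exp_abs {ν : ℝ} (hν : 0 < ν) : Integrable (fun x : ℝ => Real.exp (-ν * |x|)) := by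
  rw [← integrableOn_univ, ← Iic_union_Ioi (a := (0:ℝ))]
  refine IntegrableOn.union ?_ ?_
  · refine (integrableOn_exp_mul_Iic hν 0).congr_fun ?_ measurableSet_Iic
    intro x hx
    simp only
    rw [abs_of_nonpos hx]; ring_nf
  · refine (integrableOn_exp_mul_Ioi (neg_lt_zero.2 hν) 0).congr_fun ?_ measurableSet_Ioi
    intro x hx
    simp only
    rw [abs_of_pos hx]

lemma specK_integrable {ν : ℝ} (hν : ν ∈ Set.Ioo (0:ℝ) 1) : Integrable (specK ν) := by
  have hs := spec_sin_pos hν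
  have hpi := Real.pi_pos
  set C : ℝ := 2 / (Real.sin (π * ν) * π)
  have hi : Integrable (fun x : ℝ => C * Real.exp (-ν * |x|)) :=
    (spec_exp_abs hν.1).const_mul C
  refine hi.mono' (specK_cont hν).aestronglyMeasurable (ae_of_all _ fun x => ?_)
  rw [Real.norm_of_nonneg (specK_nonneg hν x)]
  have hge := spec_den_ge (ν := ν) (Real.exp (ν * x))
  set a := Real.exp (ν * x) with ha
  have ha0 : 0 < a := Real.exp_pos _
  have hd := spec_den_pos hν a
  have hm : a / (a ^ 2 + 1) ≤ Real.exp (-ν * |x|) := by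
    rcases le_total 0 x with h | h
    · rw [abs_of_nonneg h]
      have : Real.exp (-ν * x) = a⁻¹ := by rw [ha, ← Real.exp_neg]; ring_nf
      rw [this, div_le_iff₀ (by positivity)]
      field_simp
      nlinarith
    · rw [abs_of_nonpos h]
      have : Real.exp (-ν * -x) = a := by rw [ha]; ring_nf
      rw [this, div_le_iff₀ (by positivity)]
      nlinarith [pow_pos ha0 3]
  calc specK ν x = Real.sin (π * ν) / π * (a / (a ^ 2 + 2 * a * Real.cos (π * ν) + 1)) := rfl
    _ ≤ Real.sin (π * ν) / π * (a / (Real.sin (π * ν) ^ 2 * (a^2+1) / 2)) := by gcongr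
    _ = C * (a / (a^2+1)) := by simp only [C]; field_simp
    _ ≤ _ := by gcongr

/-- auxiliary function `e^{νw}/(e^{νw}+1)` -/
noncomputable def specF (ν : ℝ) (w : ℂ) : ℂ := Complex.exp (ν * w) / (Complex.exp (ν * w) + 1)

lemma specF_ne {ν : ℝ} (hν : ν ∈ Set.Ioo (0:ℝ) 1) {w : ℂ} (hw : |w.im| ≤ π) :
    Complex.exp (ν * w) + 1 ≠ 0 := by
  intro h
  have h1 : Complex.exp (ν * w) = -1 := by linear_combination h
  rw [← Complex.exp_pi_mul_I, Complex.exp_eq_exp_iff_exists_int] at h1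
  obtain ⟨n, hn⟩ := h1
  have h2 := congrArg Complex.im hn
  simp at h2
  have hpi := Real.pi_pos
  have hlt : |ν * w.im| < π := by
    rw [abs_mul, abs_of_pos hν.1]
    nlinarith [hν.1, hν.2, abs_nonneg w.im]
  rw [h2, abs_lt] at hlt
  have h3 : (n:ℝ) < 0 := by nlinarith
  have h4 : (-1:ℝ) < n := by nlinarith
  have h5 : n < 0 := by exact_mod_cast h3
  have h6 : -1 < n := by exact_mod_cast h4
  omega

lemma specF_diff {ν : ℝ} (hν : ν ∈ Set.Ioo (0:ℝ) 1) {w : ℂ} (hw : |w.im| ≤ π) :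
    DifferentiableAt ℂ (specF ν) w := by
  unfold specF
  refine DifferentiableAt.div (by fun_prop) (by fun_prop) (specF_ne hν hw)

lemma specF_jump {ν : ℝ} (hν : ν ∈ Set.Ioo (0:ℝ) 1) (x : ℝ) :
    specF ν (x + (-π : ℝ) * Complex.I) - specF ν (x + (π:ℝ) * Complex.I)
      = - (2 * π * Complex.I) * (specK ν x : ℂ) := by
  have h1 := specF_ne hν (w := x + (-π : ℝ) * Complex.I) (by simp [abs_of_pos Real.pi_pos])
  have h2 := specF_ne hν (w := x + (π : ℝ) * Complex.I) (by simp [abs_of_pos Real.pi_pos])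
  have hd := (spec_den_pos hν (Real.exp (ν * x))).ne'
  have hd' : ((Real.exp (ν * x) ^ 2 + 2 * Real.exp (ν * x) * Real.cos (π * ν) + 1 : ℝ) : ℂ) ≠ 0 := by
    exact_mod_cast hd
  have e1 : Complex.exp (ν * (x + (-π : ℝ) * Complex.I)) =
      Complex.exp (ν * x) * (Complex.cos (π * ν) - Complex.sin (π * ν) * Complex.I) := by
    rw [Complex.cos_sub_sin_I, ← Complex.exp_add]
    congr 1; push_cast; ring
  have e2 : Complex.exp (ν * (x + (π : ℝ) * Complex.I)) =
      Complex.exp (ν * x) * (Complex.cos (π * ν) + Complex.sin (π * ν) * Complex.I) := by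
    rw [← Complex.exp_mul_I, ← Complex.exp_add]
    congr 1; ring
  have hpi : (π : ℂ) ≠ 0 := by exact_mod_cast Real.pi_ne_zero
  have hsc := Complex.sin_sq_add_cos_sq ((π:ℂ) * ν)
  unfold specF specK
  rw [e1] at h1 ⊢
  rw [e2] at h2 ⊢
  push_cast at hd' ⊢
  set a := Complex.exp (ν * x)
  set c := Complex.cos (π * ν)
  set s := Complex.sin (π * ν)
  rw [div_sub_div _ _ h1 h2]
  have hI := Complex.I_sq
  have hprod : (a * (c - s * Complex.I) + 1) * (a * (c + s * Complex.I) + 1) =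
      a ^ 2 + 2 * a * c + 1 := by
    linear_combination a^2 * hsc - a^2*s^2*hI
  rw [hprod]
  field_simp
  ring

open scoped Interval

/-- the auxiliary holomorphic function on the strip -/
noncomputable def specH (ν p : ℝ) (w : ℂ) : ℂ :=
  dslope (specF ν) (Real.log p : ℂ) w / dslope Complex.exp (Real.log p : ℂ) w

lemma specH_of_ne {ν p : ℝ} (hp : 0 < p) {w : ℂ} (hw : w ≠ (Real.log p : ℂ)) :
    specH ν p w = (specF ν w - specF ν (Real.log p : ℂ)) / (Complex.exp w - p) := by
  unfold specH
  rw [dslope_of_ne _ hw, dslope_of_ne _ hw, slope_def_field, slope_def_field]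
  have : Complex.exp (Real.log p : ℂ) = p := by
    rw [← Complex.ofReal_exp, Real.exp_log hp]
  rw [this]
  have h2 : w - (Real.log p : ℂ) ≠ 0 := sub_ne_zero.2 hw
  rw [div_div_div_cancel_right₀ h2]

lemma spec_exp_ne {p : ℝ} (hp : 0 < p) {w : ℂ} (hw : |w.im| ≤ π) (hne : w ≠ (Real.log p : ℂ)) :
    Complex.exp w ≠ p := by
  intro h
  apply hne
  have : Complex.exp (Real.log p : ℂ) = p := by
    rw [← Complex.ofReal_exp, Real.exp_log hp]
  rw [← this, Complex.exp_eq_exp_iff_exists_int] at h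
  obtain ⟨n, hn⟩ := h
  have h2 := congrArg Complex.im hn
  simp at h2
  have hpi := Real.pi_pos
  rw [h2, abs_le] at hw
  have h3 : (n:ℝ) < 1 := by nlinarith
  have h4 : (-1:ℝ) < n := by nlinarith
  have h5 : n < 1 := by exact_mod_cast h3
  have h6 : -1 < n := by exact_mod_cast h4
  have : n = 0 := by omega
  rw [hn, this]; simp

lemma specH_diff {ν p : ℝ} (hν : ν ∈ Set.Ioo (0:ℝ) 1) (hp : 0 < p) {R : ℝ}
    (hR : |Real.log p| < R) :
    DifferentiableOn ℂ (specH ν p) ([[-R, R]] ×ℂ [[-π, π]]) := by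
  have hpi := Real.pi_pos
  have hR0 : 0 ≤ R := (abs_nonneg _).trans hR.le
  have hmem : ([[-R, R]] ×ℂ [[-π, π]]) ∈ 𝓝 (Real.log p : ℂ) := by
    rw [uIcc_of_le (by linarith), uIcc_of_le (by linarith)]
    rw [← mem_interior_iff_mem_nhds, Complex.interior_reProdIm, interior_Icc, interior_Icc]
    rw [Complex.mem_reProdIm]
    simp only [Complex.ofReal_re, Complex.ofReal_im]
    exact ⟨abs_lt.1 hR, by linarith, hpi⟩
  have him : ∀ w ∈ ([[-R, R]] ×ℂ [[-π, π]]), |w.im| ≤ π := by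
    intro w hw
    rw [uIcc_of_le (by linarith : -π ≤ π), Complex.mem_reProdIm] at hw
    exact abs_le.2 hw.2
  unfold specH
  refine DifferentiableOn.div ?_ ?_ ?_
  · exact (Complex.differentiableOn_dslope hmem).2
      fun w hw => (specF_diff hν (him w hw)).differentiableWithinAt
  · exact (Complex.differentiableOn_dslope hmem).2 Complex.differentiable_exp.differentiableOn
  · intro w hw
    by_cases h : w = (Real.log p : ℂ)
    · rw [h, dslope_same, Complex.deriv_exp]; exact Complex.exp_ne_zero _
    · rw [dslope_of_ne _ h, slope_def_field]
      refine div_ne_zero (sub_ne_zero.2 ?_) (sub_ne_zero.2 h)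
      rw [← Complex.ofReal_exp, Real.exp_log hp]
      exact spec_exp_ne hp (him w hw) h

lemma spec_contour {ν p : ℝ} (hν : ν ∈ Set.Ioo (0:ℝ) 1) (hp : 0 < p) {R : ℝ}
    (hR : |Real.log p| < R) :
    2 * π * Complex.I * (∫ x : ℝ in -R..R, (specK ν x : ℂ) / (Complex.exp x + p)) +
      Complex.I * (∫ y : ℝ in -π..π, specH ν p (R + y * Complex.I)) -
      Complex.I * (∫ y : ℝ in -π..π, specH ν p ((-R : ℝ) + y * Complex.I)) = 0 := by
  have hpi := Real.pi_pos
  have hd := specH_diff hν hp hR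
  have key := Complex.integral_boundary_rect_eq_zero_of_differentiableOn (specH ν p)
    ((-R : ℝ) + (-π : ℝ) * Complex.I) ((R : ℝ) + (π : ℝ) * Complex.I) (by
      simpa using hd)
  simp only [smul_eq_mul, Complex.add_re, Complex.add_im, Complex.ofReal_re, Complex.ofReal_im,
    Complex.mul_re, Complex.mul_im, Complex.I_re, Complex.I_im, mul_zero, mul_one, zero_add,
    add_zero, sub_self] at key
  rw [← intervalIntegral.integral_sub] at key
  · rw [← key]
    congr 2
    rw [← intervalIntegral.integral_const_mul]
    refine intervalIntegral.integral_congr fun x _ => ?_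
    have hn1 : (x : ℂ) + (-π : ℝ) * Complex.I ≠ (Real.log p : ℂ) := by
      intro h; have := congrArg Complex.im h; simp at this
    have hn2 : (x : ℂ) + (π : ℝ) * Complex.I ≠ (Real.log p : ℂ) := by
      intro h; have := congrArg Complex.im h; simp at this
    have e1 : Complex.exp ((x : ℂ) + (-π : ℝ) * Complex.I) = - Complex.exp x := by
      rw [Complex.exp_add]; push_cast; rw [neg_mul, Complex.exp_neg, Complex.exp_pi_mul_I]; simp
    have e2 : Complex.exp ((x : ℂ) + (π : ℝ) * Complex.I) = - Complex.exp x := by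
      rw [Complex.exp_add, Complex.exp_pi_mul_I]; simp
    rw [specH_of_ne hp hn1, specH_of_ne hp hn2, e1, e2, ← sub_div, sub_sub_sub_cancel_right,
      specF_jump hν x]
    have : - Complex.exp (x:ℂ) - p = -(Complex.exp x + p) := by ring
    rw [this, neg_mul, neg_div_neg_eq, mul_div_assoc]
  all_goals
    have hR0 : 0 ≤ R := (abs_nonneg _).trans hR.le
    refine ContinuousOn.intervalIntegrable ?_
    refine hd.continuousOn.comp (by fun_prop) fun x hx => ?_
    rw [Complex.mem_reProdIm]
    simp
    simpa using hx

lemma specH_right {ν p : ℝ} (hν : ν ∈ Set.Ioo (0:ℝ) 1) (hp : 0 < p) :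
    Tendsto (fun R : ℝ => ∫ y : ℝ in -π..π, specH ν p (R + y * Complex.I)) atTop (𝓝 0) := by
  set f0 := specF ν (Real.log p : ℂ)
  have hlim : Tendsto (fun R : ℝ => (2 + ‖f0‖) / (Real.exp R - p) * |π - -π|) atTop (𝓝 0) := by
    have h : Tendsto (fun R : ℝ => Real.exp R - p) atTop atTop :=
      tendsto_atTop_add_const_right _ _ Real.tendsto_exp_atTop
    simpa using (h.const_div_atTop (2 + ‖f0‖)).mul_const |π - -π|
  refine squeeze_zero_norm' ?_ hlim
  have hE : ∀ᶠ R : ℝ in atTop, 2 ≤ Real.exp (ν * R) :=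
    (Real.tendsto_exp_atTop.comp (tendsto_id.const_mul_atTop hν.1)).eventually_ge_atTop 2
  filter_upwards [eventually_gt_atTop (Real.log p), hE] with R hR hE
  refine intervalIntegral.norm_integral_le_of_norm_le_const fun y _ => ?_
  have hne : (R : ℂ) + y * Complex.I ≠ (Real.log p : ℂ) := by
    intro h; have := congrArg Complex.re h; simp at this; linarith
  have hRp : p < Real.exp R := (Real.log_lt_iff_lt_exp hp).1 hR
  rw [specH_of_ne hp hne, norm_div]
  have n1 : ‖Complex.exp ((R : ℂ) + y * Complex.I)‖ = Real.exp R := by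
    rw [Complex.norm_exp]; simp
  have n2 : ‖Complex.exp (ν * ((R : ℂ) + y * Complex.I))‖ = Real.exp (ν * R) := by
    rw [Complex.norm_exp]; simp
  have hf : ‖specF ν ((R : ℂ) + y * Complex.I)‖ ≤ 2 := by
    unfold specF
    have h := norm_sub_le_norm_add (Complex.exp (ν * ((R : ℂ) + y * Complex.I))) 1
    rw [n2, norm_one] at h
    rw [norm_div, n2, div_le_iff₀ (by linarith)]
    linarith
  have hd : Real.exp R - p ≤ ‖Complex.exp ((R : ℂ) + y * Complex.I) - p‖ := by
    have h := norm_sub_norm_le (Complex.exp ((R : ℂ) + y * Complex.I)) (p : ℂ)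
    rw [n1, Complex.norm_real, Real.norm_of_nonneg hp.le] at h
    exact h
  have hs : ‖specF ν ((R : ℂ) + y * Complex.I) - f0‖ ≤ 2 + ‖f0‖ :=
    (norm_sub_le _ _).trans (by linarith)
  have : 0 < Real.exp R - p := by linarith
  gcongr

lemma specH_left {ν p : ℝ} (hν : ν ∈ Set.Ioo (0:ℝ) 1) (hp : 0 < p) :
    Tendsto (fun R : ℝ => ∫ y : ℝ in -π..π, specH ν p ((-R : ℝ) + y * Complex.I)) atTop
      (𝓝 (2 * π * (specF ν (Real.log p : ℂ) / p))) := by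
  set f0 := specF ν (Real.log p : ℂ)
  have hlim : Tendsto (fun R : ℝ => (p * (2 * Real.exp (-(ν * R))) + ‖f0‖ * Real.exp (-R)) /
      (p * (p - Real.exp (-R))) * |π - -π|) atTop (𝓝 0) := by
    have h1 : Tendsto (fun R : ℝ => Real.exp (-R)) atTop (𝓝 0) := Real.tendsto_exp_neg_atTop_nhds_zero
    have h2 : Tendsto (fun R : ℝ => Real.exp (-(ν * R))) atTop (𝓝 0) :=
      h1.comp (tendsto_id.const_mul_atTop hν.1)
    have h3 := ((((h2.const_mul 2).const_mul p).add (h1.const_mul ‖f0‖)).div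
      ((h1.const_sub p).const_mul p) (by simp [hp.ne'])).mul_const |π - -π|
    simpa using h3
  rw [tendsto_iff_norm_sub_tendsto_zero]
  refine squeeze_zero' (Eventually.of_forall fun _ => norm_nonneg _) ?_ hlim
  have hE : ∀ᶠ R : ℝ in atTop, 2 ≤ Real.exp (ν * R) :=
    (Real.tendsto_exp_atTop.comp (tendsto_id.const_mul_atTop hν.1)).eventually_ge_atTop 2
  filter_upwards [eventually_gt_atTop |Real.log p|, hE] with R hR hE
  have hR1 := (abs_lt.1 hR).1
  have hpi := Real.pi_pos
  have hint : IntervalIntegrable (fun y : ℝ => specH ν p ((-R : ℝ) + y * Complex.I)) volume (-π) π := by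
    refine ContinuousOn.intervalIntegrable ?_
    refine (specH_diff hν hp hR).continuousOn.comp (by fun_prop) fun x hx => ?_
    rw [Complex.mem_reProdIm]
    simp
    simpa using hx
  have hc : ∫ y : ℝ in -π..π, (f0 / p) = 2 * π * (f0 / p) := by
    rw [intervalIntegral.integral_const]
    simp only [sub_neg_eq_add, Complex.real_smul]
    push_cast; ring
  rw [← hc, ← intervalIntegral.integral_sub hint intervalIntegrable_const]
  refine intervalIntegral.norm_integral_le_of_norm_le_const fun y _ => ?_
  have hne : ((-R : ℝ) : ℂ) + y * Complex.I ≠ (Real.log p : ℂ) := by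
    intro h; have := congrArg Complex.re h; simp at this; linarith
  have hRp : Real.exp (-R) < p := (Real.lt_log_iff_exp_lt hp).1 hR1
  have hen : 0 < Real.exp (-(ν * R)) := Real.exp_pos _
  have hen2 : Real.exp (-(ν * R)) ≤ 1 / 2 := by
    rw [Real.exp_neg, one_div]; exact inv_anti₀ (by norm_num) hE
  rw [specH_of_ne hp hne]
  have n1 : ‖Complex.exp (((-R : ℝ) : ℂ) + y * Complex.I)‖ = Real.exp (-R) := by
    rw [Complex.norm_exp]; simp
  have n2 : ‖Complex.exp (ν * (((-R : ℝ) : ℂ) + y * Complex.I))‖ = Real.exp (-(ν * R)) := by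
    rw [Complex.norm_exp]; simp
  have hf : ‖specF ν (((-R : ℝ) : ℂ) + y * Complex.I)‖ ≤ 2 * Real.exp (-(ν * R)) := by
    unfold specF
    have h := norm_sub_le_norm_add 1 (Complex.exp (ν * (((-R : ℝ) : ℂ) + y * Complex.I)))
    rw [n2, norm_one, add_comm] at h
    rw [norm_div, n2, div_le_iff₀ (by linarith)]
    nlinarith
  have hd : p - Real.exp (-R) ≤ ‖Complex.exp (((-R : ℝ) : ℂ) + y * Complex.I) - p‖ := by
    have h := norm_sub_norm_le (p : ℂ) (Complex.exp (((-R : ℝ) : ℂ) + y * Complex.I))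
    rw [n1, Complex.norm_real, Real.norm_of_nonneg hp.le, norm_sub_rev] at h
    exact h
  have hpos : 0 < p - Real.exp (-R) := by linarith
  have hd0 : Complex.exp (((-R : ℝ) : ℂ) + y * Complex.I) - p ≠ 0 := by
    intro h; rw [h, norm_zero] at hd; linarith
  have hp0 : (p : ℂ) ≠ 0 := by exact_mod_cast hp.ne'
  set F := specF ν (((-R : ℝ) : ℂ) + y * Complex.I)
  set E := Complex.exp (((-R : ℝ) : ℂ) + y * Complex.I)
  have hrew : (F - f0) / (E - p) - f0 / p = (p * F - f0 * E) / (p * (E - p)) := by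
    field_simp
    ring
  rw [hrew, norm_div, norm_mul, Complex.norm_real, Real.norm_of_nonneg hp.le]
  have hs : ‖p * F - f0 * E‖ ≤ p * (2 * Real.exp (-(ν * R))) + ‖f0‖ * Real.exp (-R) := by
    refine (norm_sub_le _ _).trans ?_
    rw [norm_mul, norm_mul, n1, Complex.norm_real, Real.norm_of_nonneg hp.le]
    gcongr
  gcongr

lemma spec_stieltjes {ν p : ℝ} (hν : ν ∈ Set.Ioo (0:ℝ) 1) (hp : 0 < p) :
    ∫ x : ℝ, specK ν x / (Real.exp x + p) = 1 / (p * (1 + p ^ (-ν))) := by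
  have hi : Integrable (fun x : ℝ => specK ν x / (Real.exp x + p)) := by
    refine ((specK_integrable hν).div_const p).mono' ?_ (ae_of_all _ fun x => ?_)
    · refine Continuous.aestronglyMeasurable ((specK_cont hν).div (by fun_prop) ?_)
      intro x; positivity
    · rw [Real.norm_of_nonneg (div_nonneg (specK_nonneg hν x) (by positivity))]
      gcongr
      · exact specK_nonneg hν x
      · linarith [Real.exp_pos x]
  have hi' : Integrable (fun x : ℝ => (specK ν x : ℂ) / (Complex.exp x + p)) := by
    convert hi.ofReal (𝕜 := ℂ) using 2 with x
    simp
  have h1 := (intervalIntegral_tendsto_integral hi' tendsto_neg_atTop_atBot tendsto_id)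
  have h2 := ((h1.const_mul (2 * π * Complex.I)).add
    ((specH_right hν hp).const_mul Complex.I)).sub ((specH_left hν hp).const_mul Complex.I)
  have h3 := tendsto_nhds_unique h2 (tendsto_const_nhds.congr' (by
    filter_upwards [eventually_gt_atTop |Real.log p|] with R hR
    exact (spec_contour hν hp hR).symm))
  have hpi : (π : ℂ) ≠ 0 := by exact_mod_cast Real.pi_ne_zero
  have h4 : ∫ x : ℝ, (specK ν x : ℂ) / (Complex.exp x + p) = specF ν (Real.log p : ℂ) / p := by
    have : (2 * π * Complex.I) * ((∫ x : ℝ, (specK ν x : ℂ) / (Complex.exp x + p))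
      - specF ν (Real.log p : ℂ) / p) = 0 := by linear_combination h3
    have h5 := (mul_eq_zero.1 this).resolve_left (by simp [hpi])
    exact sub_eq_zero.1 h5
  have h6 : ((∫ x : ℝ, specK ν x / (Real.exp x + p) : ℝ) : ℂ) =
      ((1 / (p * (1 + p ^ (-ν))) : ℝ) : ℂ) := by
    rw [← integral_complex_ofReal]
    have e : ∀ x : ℝ, ((specK ν x / (Real.exp x + p) : ℝ) : ℂ) =
      (specK ν x : ℂ) / (Complex.exp x + p) := by intro x; push_cast; rfl
    simp_rw [e]
    rw [h4]
    have e2 : specF ν (Real.log p : ℂ) = ((p ^ ν / (p ^ ν + 1) : ℝ) : ℂ) := by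
      rw [Real.rpow_def_of_pos hp]
      unfold specF
      push_cast
      rw [mul_comm (ν : ℂ)]
    rw [e2]
    norm_cast
    rw [Real.rpow_neg hp.le]
    have := Real.rpow_pos_of_pos hp ν
    field_simp
  exact_mod_cast h6

lemma ml_gamma_ge {A s : ℝ} (hA : 0 < A) (hs : 0 ≤ s) :
    A ^ s * Real.exp (-A) ≤ Real.Gamma (s + 1) := by
  rw [Real.Gamma_eq_integral (by linarith)]
  have hi := Real.GammaIntegral_convergent (s := s + 1) (by linarith)
  have hsub : Ioi A ⊆ Ioi (0:ℝ) := Ioi_subset_Ioi hA.le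
  calc A ^ s * Real.exp (-A) = ∫ x in Ioi A, A ^ s * Real.exp (-x) := by
        rw [integral_const_mul, integral_exp_neg_Ioi]
    _ ≤ ∫ x in Ioi A, Real.exp (-x) * x ^ (s + 1 - 1) := by
        refine setIntegral_mono_on ((integrableOn_exp_neg_Ioi A).const_mul _) (hi.mono_set hsub)
          measurableSet_Ioi fun x hx => ?_
        rw [add_sub_cancel_right, mul_comm]
        have : A ≤ x := le_of_lt hx
        gcongr
    _ ≤ _ := by
        refine setIntegral_mono_set hi ?_ (HasSubset.Subset.eventuallyLE hsub)
        filter_upwards [ae_restrict_mem measurableSet_Ioi] with x hx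
        have : (0:ℝ) < x := hx
        simp only [Pi.zero_apply]
        positivity

lemma ml_bound {ν : ℝ} (hν : 0 < ν) {R : ℝ} (hR : 0 ≤ R) :
    ∃ C : ℝ, ∀ k : ℕ, ∀ x : ℝ, |x| ≤ R →
      ‖x ^ k / Real.Gamma (ν * k + 1)‖ ≤ C * (1 / 2) ^ k := by
  set A : ℝ := (2 * (R + 1)) ^ (1 / ν)
  have hA : 0 < A := by positivity
  have hA' : A ^ ν = 2 * (R + 1) := by
    rw [← Real.rpow_mul (by positivity), one_div, inv_mul_cancel₀ hν.ne', Real.rpow_one]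
  refine ⟨Real.exp A, fun k x hx => ?_⟩
  have hg := ml_gamma_ge hA (s := ν * k) (by positivity)
  rw [Real.rpow_mul hA.le, hA', Real.rpow_natCast] at hg
  have hG : 0 < Real.Gamma (ν * k + 1) := Real.Gamma_pos_of_pos (by positivity)
  rw [norm_div, norm_pow, Real.norm_eq_abs, Real.norm_of_nonneg hG.le, div_le_iff₀ hG]
  calc |x| ^ k ≤ (R + 1) ^ k := by gcongr; linarith
    _ = Real.exp A * (1 / 2) ^ k * ((2 * (R + 1)) ^ k * Real.exp (-A)) := by
      rw [Real.exp_neg, mul_pow, one_div, inv_pow]; field_simp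
    _ ≤ _ := by gcongr

lemma ml_summable {ν : ℝ} (hν : 0 < ν) (x : ℝ) :
    Summable fun k : ℕ => x ^ k / Real.Gamma (ν * k + 1) := by
  obtain ⟨C, hC⟩ := ml_bound hν (abs_nonneg x)
  refine Summable.of_norm_bounded (g := fun k : ℕ => C * (1 / 2 : ℝ) ^ k) ?_ fun k => hC k x le_rfl
  exact (summable_geometric_of_lt_one (by norm_num) (by norm_num)).mul_left C

lemma ml_cont {ν : ℝ} (hν : 0 < ν) : Continuous (mittagLeffler ν) := by
  rw [continuous_iff_continuousAt]
  intro x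
  obtain ⟨C, hC⟩ := ml_bound hν (R := |x| + 1) (by positivity)
  have : ContinuousOn (mittagLeffler ν) (Icc (-(|x| + 1)) (|x| + 1)) := by
    unfold mittagLeffler
    refine continuousOn_tsum (u := fun k : ℕ => C * (1 / 2 : ℝ) ^ k) (fun k => by fun_prop) ?_ ?_
    · exact (summable_geometric_of_lt_one (by norm_num) (by norm_num)).mul_left C
    · intro k y hy
      exact hC k y (abs_le.2 hy)
  refine this.continuousAt (Icc_mem_nhds ?_ ?_)
  · linarith [neg_abs_le x]
  · linarith [le_abs_self x]

lemma ml_laplace {ν : ℝ} (hν : 0 < ν) {p : ℝ} (hp : 1 < p) {ε : ℝ} (hε : |ε| = 1) :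
    ∫ t in Ioi (0:ℝ), Real.exp (-(p * t)) * mittagLeffler ν (ε * t ^ ν) =
      1 / (p * (1 - ε * p ^ (-ν))) := by
  have hp0 : 0 < p := by linarith
  set F : ℕ → ℝ → ℝ := fun k t => Real.exp (-(p * t)) * ((ε * t ^ ν) ^ k / Real.Gamma (ν * k + 1))
  have hF : ∀ k : ℕ, ∀ t ∈ Ioi (0:ℝ), F k t =
      ε ^ k / Real.Gamma (ν * k + 1) * (t ^ ((ν * k + 1) - 1) * Real.exp (-(p * t))) := by
    intro k t ht
    have ht : (0:ℝ) < t := ht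
    simp only [F]
    rw [add_sub_cancel_right, mul_pow, Real.rpow_mul ht.le, Real.rpow_natCast]
    ring
  have hpos : ∀ k : ℕ, 0 < ν * k + 1 := fun k => by positivity
  have hG : ∀ k : ℕ, 0 < Real.Gamma (ν * k + 1) := fun k => Real.Gamma_pos_of_pos (hpos k)
  have hi0 : ∀ k : ℕ, IntegrableOn
      (fun t : ℝ => t ^ ((ν * k + 1) - 1) * Real.exp (-(p * t))) (Ioi 0) := by
    intro k
    apply Integrable.of_integral_ne_zero
    rw [Real.integral_rpow_mul_exp_neg_mul_Ioi (hpos k) hp0]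
    have := hG k
    positivity
  have hi : ∀ k, Integrable (F k) (volume.restrict (Ioi 0)) := by
    intro k
    have h := (hi0 k).const_mul (ε ^ k / Real.Gamma (ν * k + 1))
    refine h.congr ?_
    filter_upwards [ae_restrict_mem measurableSet_Ioi] with t ht using (hF k t ht).symm
  have hval : ∀ k, ∫ t in Ioi (0:ℝ), F k t = p⁻¹ * (ε * p ^ (-ν)) ^ k := by
    intro k
    rw [setIntegral_congr_fun measurableSet_Ioi (hF k), integral_const_mul,
      Real.integral_rpow_mul_exp_neg_mul_Ioi (hpos k) hp0]
    have := (hG k).ne'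
    rw [one_div, Real.inv_rpow hp0.le, Real.rpow_add hp0, Real.rpow_mul hp0.le, Real.rpow_natCast,
      Real.rpow_one, mul_pow, Real.rpow_neg hp0.le, inv_pow]
    field_simp
  have hvaln : ∀ k, ∫ t in Ioi (0:ℝ), ‖F k t‖ = p⁻¹ * (p ^ (-ν)) ^ k := by
    intro k
    have : ∀ t ∈ Ioi (0:ℝ), ‖F k t‖ =
      1 / Real.Gamma (ν * k + 1) * (t ^ ((ν * k + 1) - 1) * Real.exp (-(p * t))) := by
      intro t ht
      have ht' : (0:ℝ) < t := ht
      rw [hF k t ht, norm_mul, norm_div, norm_pow, Real.norm_eq_abs, hε, one_pow,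
        Real.norm_of_nonneg (hG k).le, Real.norm_of_nonneg (by positivity)]
    rw [setIntegral_congr_fun measurableSet_Ioi this, integral_const_mul,
      Real.integral_rpow_mul_exp_neg_mul_Ioi (hpos k) hp0]
    have := (hG k).ne'
    rw [one_div p, Real.inv_rpow hp0.le, Real.rpow_add hp0, Real.rpow_mul hp0.le, Real.rpow_natCast,
      Real.rpow_one, Real.rpow_neg hp0.le, inv_pow]
    field_simp
  have hq0 : 0 < p ^ (-ν) := Real.rpow_pos_of_pos hp0 _
  have hq1 : p ^ (-ν) < 1 := Real.rpow_lt_one_of_one_lt_of_neg hp (by linarith)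
  have hsum : Summable fun k => ∫ t in Ioi (0:ℝ), ‖F k t‖ := by
    simp_rw [hvaln]
    exact (summable_geometric_of_lt_one hq0.le hq1).mul_left _
  have h1 := hasSum_integral_of_summable_integral_norm hi hsum
  simp_rw [hval] at h1
  have hlt : ‖ε * p ^ (-ν)‖ < 1 := by
    rw [norm_mul, Real.norm_eq_abs, hε, one_mul, Real.norm_of_nonneg hq0.le]; exact hq1
  have h2 := (hasSum_geometric_of_norm_lt_one hlt).mul_left p⁻¹
  have h3 := h1.unique h2
  rw [one_div, mul_inv, ← h3]
  congr 1
  ext t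
  simp only [F, mittagLeffler]
  rw [tsum_mul_left]

lemma ml_integrable {ν : ℝ} (hν : 0 < ν) {p : ℝ} (hp : 1 < p) :
    IntegrableOn (fun t => Real.exp (-(p * t)) * mittagLeffler ν (-t ^ ν)) (Ioi 0) := by
  have hp0 : 0 < p := by linarith
  have hq0 : 0 < p ^ (-ν) := Real.rpow_pos_of_pos hp0 _
  have hq1 : p ^ (-ν) < 1 := Real.rpow_lt_one_of_one_lt_of_neg hp (by linarith)
  have h1 : IntegrableOn (fun t => Real.exp (-(p * t)) * mittagLeffler ν (1 * t ^ ν)) (Ioi 0) := by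
    apply Integrable.of_integral_ne_zero
    rw [ml_laplace hν hp (by simp)]
    have : 0 < 1 - 1 * p ^ (-ν) := by linarith
    positivity
  have hc := ml_cont hν
  refine Integrable.mono' h1 ?_ ?_
  · refine Continuous.aestronglyMeasurable ?_
    have : Continuous fun t : ℝ => t ^ ν := Real.continuous_rpow_const hν.le
    fun_prop
  · filter_upwards [ae_restrict_mem measurableSet_Ioi] with t ht
    have ht : (0:ℝ) < t := ht
    have htν : 0 < t ^ ν := Real.rpow_pos_of_pos ht _
    rw [norm_mul, Real.norm_of_nonneg (Real.exp_pos _).le, one_mul]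
    gcongr
    unfold mittagLeffler
    have hn : ∀ k : ℕ, ‖(-t ^ ν) ^ k / Real.Gamma (ν * k + 1)‖ =
      (t ^ ν) ^ k / Real.Gamma (ν * k + 1) := by
      intro k
      rw [norm_div, norm_pow, norm_neg, Real.norm_of_nonneg htν.le,
        Real.norm_of_nonneg (Real.Gamma_pos_of_pos (by positivity)).le]
    refine (norm_tsum_le_tsum_norm ?_).trans ?_
    · simp_rw [hn]; exact ml_summable hν _
    · simp_rw [hn]; exact le_rfl

/-- Laplace transform of the spectral density. -/
noncomputable def specG (ν t : ℝ) : ℝ := ∫ x : ℝ, specK ν x * Real.exp (-(t * Real.exp x))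

lemma specG_cont {ν : ℝ} (hν : ν ∈ Set.Ioo (0:ℝ) 1) : ContinuousOn (specG ν) (Ioi 0) := by
  unfold specG
  have hk := specK_cont hν
  refine continuousOn_of_dominated (bound := specK ν) ?_ ?_ (specK_integrable hν) ?_
  · intro t _
    exact Continuous.aestronglyMeasurable (by fun_prop)
  · intro t ht
    have ht : (0:ℝ) < t := ht
    refine ae_of_all _ fun x => ?_
    rw [norm_mul, Real.norm_of_nonneg (specK_nonneg hν x), Real.norm_of_nonneg (Real.exp_pos _).le]
    refine mul_le_of_le_one_right (specK_nonneg hν x) (Real.exp_le_one_iff.2 ?_)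
    have := Real.exp_pos x
    nlinarith
  · exact ae_of_all _ fun x => Continuous.continuousOn (by fun_prop)

lemma specG_prod_int {ν : ℝ} (hν : ν ∈ Set.Ioo (0:ℝ) 1) {p : ℝ} (hp : 0 < p) :
    Integrable (Function.uncurry fun t x : ℝ =>
      Real.exp (-(p * t)) * (specK ν x * Real.exp (-(t * Real.exp x))))
      ((volume.restrict (Ioi (0:ℝ))).prod volume) := by
  have hk := specK_cont hν
  have he : Integrable (fun t : ℝ => Real.exp (-(p * t))) (volume.restrict (Ioi (0:ℝ))) := by
    have := integrableOn_exp_mul_Ioi (neg_lt_zero.2 hp) 0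
    simp only [neg_mul] at this
    exact this
  refine (he.mul_prod (specK_integrable hν)).mono' ?_ ?_
  · refine Continuous.aestronglyMeasurable ?_
    unfold Function.uncurry
    fun_prop
  · have h1 : ∀ᵐ z : ℝ × ℝ ∂((volume.restrict (Ioi (0:ℝ))).prod volume), z.1 ∈ Ioi (0:ℝ) :=
      Measure.quasiMeasurePreserving_fst.ae (ae_restrict_mem measurableSet_Ioi)
    filter_upwards [h1] with z hz
    have hz : 0 < z.1 := hz
    simp only [Function.uncurry]
    rw [norm_mul, norm_mul, Real.norm_of_nonneg (specK_nonneg hν _),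
      Real.norm_of_nonneg (Real.exp_pos _).le, Real.norm_of_nonneg (Real.exp_pos _).le]
    gcongr
    refine mul_le_of_le_one_right (specK_nonneg hν _) (Real.exp_le_one_iff.2 ?_)
    have := Real.exp_pos z.2
    nlinarith

lemma specG_integrable {ν : ℝ} (hν : ν ∈ Set.Ioo (0:ℝ) 1) {p : ℝ} (hp : 0 < p) :
    IntegrableOn (fun t => Real.exp (-(p * t)) * specG ν t) (Ioi 0) := by
  have h := (specG_prod_int hν hp).integral_prod_left
  simp only [Function.uncurry, integral_const_mul] at h
  exact h

lemma specG_laplace {ν : ℝ} (hν : ν ∈ Set.Ioo (0:ℝ) 1) {p : ℝ} (hp : 0 < p) :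
    ∫ t in Ioi (0:ℝ), Real.exp (-(p * t)) * specG ν t = 1 / (p * (1 + p ^ (-ν))) := by
  rw [← spec_stieltjes hν hp]
  unfold specG
  simp_rw [← integral_const_mul]
  rw [integral_integral_swap (specG_prod_int hν hp)]
  congr 1
  ext x
  have hx := Real.exp_pos x
  have e : ∀ t : ℝ, Real.exp (-(p * t)) * (specK ν x * Real.exp (-(t * Real.exp x))) =
      specK ν x * Real.exp (-(p + Real.exp x) * t) := by
    intro t
    rw [mul_left_comm, ← Real.exp_add]
    congr 2; ring
  simp_rw [e]
  rw [integral_const_mul, integral_exp_mul_Ioi (by linarith)]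
  rw [mul_zero, Real.exp_zero, neg_div_neg_eq, add_comm, mul_one_div]

lemma laplace_unique {D : ℝ → ℝ} (hc : ContinuousOn D (Ioi 0))
    (hint : ∀ p : ℝ, 1 < p → IntegrableOn (fun t => Real.exp (-(p * t)) * D t) (Ioi 0))
    (hz : ∀ p : ℝ, 1 < p → ∫ t in Ioi (0:ℝ), Real.exp (-(p * t)) * D t = 0) :
    ∀ t : ℝ, 0 < t → D t = 0 := by
  set U : Set ℂ := {z | 1 < z.re} with hU
  have hUo : IsOpen U := isOpen_lt continuous_const Complex.continuous_re
  have hUc : IsPreconnected U := (convex_halfSpace_re_gt 1).isPreconnected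
  have hDm : AEStronglyMeasurable (fun t : ℝ => (D t : ℂ)) (volume.restrict (Ioi 0)) :=
    Complex.continuous_ofReal.comp_aestronglyMeasurable
      (hc.aestronglyMeasurable measurableSet_Ioi)
  set H : ℂ → ℂ := fun z => ∫ t in Ioi (0:ℝ), Complex.exp (-(z * t)) * (D t : ℂ) with hH
  have hn : ∀ (z : ℂ) (t : ℝ), ‖Complex.exp (-(z * t))‖ = Real.exp (-(z.re * t)) := by
    intro z t
    rw [Complex.norm_exp]; simp
  have hintC : ∀ z ∈ U, Integrable (fun t : ℝ => Complex.exp (-(z * t)) * (D t : ℂ))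
      (volume.restrict (Ioi 0)) := by
    intro z hz
    refine (hint z.re hz).norm.mono' ?_ (ae_of_all _ fun t => ?_)
    · exact AEStronglyMeasurable.mul (Continuous.aestronglyMeasurable (by fun_prop)) hDm
    · rw [norm_mul, hn, norm_mul, Complex.norm_real, Real.norm_of_nonneg (Real.exp_pos _).le]
  have hd : DifferentiableOn ℂ H U := by
    intro z hzU
    have hzU' : 1 < z.re := hzU
    set d := (z.re - 1) / 4 with hdd
    have hd0 : 0 < d := by rw [hdd]; linarith
    refine DifferentiableAt.differentiableWithinAt ?_
    have key := hasDerivAt_integral_of_dominated_loc_of_deriv_le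
      (μ := volume.restrict (Ioi (0:ℝ)))
      (F := fun (z : ℂ) (t : ℝ) => Complex.exp (-(z * t)) * (D t : ℂ))
      (F' := fun (z : ℂ) (t : ℝ) => Complex.exp (-(z * t)) * (-t) * (D t : ℂ)) (x₀ := z)
      (bound := fun t => d⁻¹ * ‖Real.exp (-((1 + d) * t)) * D t‖)
      (Metric.ball_mem_nhds z (show 0 < 2 * d by linarith)) ?_ (hintC z hzU) ?_ ?_ ?_ ?_
    · exact key.2.differentiableAt
    · refine Eventually.of_forall fun z => ?_
      exact AEStronglyMeasurable.mul (Continuous.aestronglyMeasurable (by fun_prop)) hDm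
    · exact AEStronglyMeasurable.mul (Continuous.aestronglyMeasurable (by fun_prop)) hDm
    · filter_upwards [ae_restrict_mem measurableSet_Ioi] with t ht y hy
      have ht : (0:ℝ) < t := ht
      have hre : z.re - 2 * d < y.re := by
        have h1 : ‖y - z‖ < 2 * d := by simpa [dist_eq_norm] using hy
        have h2 := (abs_le.1 ((Complex.abs_re_le_norm (y - z)).trans h1.le)).1
        have h3 := (abs_lt.1 ((Complex.abs_re_le_norm (y - z)).trans_lt h1)).1
        rw [Complex.sub_re] at h3
        linarith
      rw [norm_mul, norm_mul, hn, norm_neg, Complex.norm_real, Complex.norm_real, norm_mul,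
        Real.norm_of_nonneg ht.le, Real.norm_of_nonneg (Real.exp_pos _).le, ← mul_assoc]
      refine mul_le_mul_of_nonneg_right ?_ (norm_nonneg _)
      have h4 : t ≤ d⁻¹ * Real.exp (d * t) := by
        rw [← div_eq_inv_mul, le_div_iff₀ hd0]
        linarith [Real.add_one_le_exp (d * t)]
      calc Real.exp (-(y.re * t)) * t
          ≤ Real.exp (-((1 + 2 * d) * t)) * (d⁻¹ * Real.exp (d * t)) := by
            gcongr
            rw [hdd] at hre ⊢; linarith
        _ = d⁻¹ * Real.exp (-((1 + d) * t)) := by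
            rw [mul_left_comm, ← Real.exp_add]; congr 2; ring
    · exact (hint (1 + d) (by linarith)).norm.const_mul _
    · refine ae_of_all _ fun t y _ => ?_
      refine HasDerivAt.mul_const ?_ _
      refine HasDerivAt.cexp ?_
      have h := ((hasDerivAt_id y).mul_const (t : ℂ)).neg
      simp only [one_mul] at h
      exact h
  have hreal : ∀ p : ℝ, 1 < p → H p = 0 := by
    intro p hp
    have : ∀ t : ℝ, Complex.exp (-((p:ℂ) * t)) * (D t : ℂ) =
      ((Real.exp (-(p * t)) * D t : ℝ) : ℂ) := by intro t; push_cast; rfl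
    simp only [hH, this]
    rw [integral_complex_ofReal, hz p hp]; simp
  have hfreq : ∃ᶠ z in 𝓝[≠] (2:ℂ), H z = 0 := by
    have ht : Tendsto (fun p : ℝ => (p : ℂ)) (𝓝[≠] (2:ℝ)) (𝓝[≠] (2:ℂ)) := by
      refine tendsto_nhdsWithin_iff.2 ⟨?_, ?_⟩
      · have := (Complex.continuous_ofReal.tendsto (2:ℝ)).mono_left
          (nhdsWithin_le_nhds (s := {(2:ℝ)}ᶜ))
        simpa using this
      · filter_upwards [self_mem_nhdsWithin] with p hp
        simp only [mem_compl_iff, mem_singleton_iff] at hp ⊢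
        exact_mod_cast hp
    have he : ∀ᶠ p : ℝ in 𝓝[≠] (2:ℝ), H p = 0 := by
      filter_upwards [nhdsWithin_le_nhds (Ioi_mem_nhds (show (1:ℝ) < 2 by norm_num))] with p hp
      exact hreal p hp
    exact ht.frequently he.frequently
  have hall : EqOn H 0 U := (hd.analyticOnNhd hUo).eqOn_zero_of_preconnected_of_frequently_eq_zero
    hUc (show (2:ℂ) ∈ U by simp [hU]) hfreq
  -- Fourier inversion
  set f : ℝ → ℂ := (Ioi (0:ℝ)).indicator fun t => Complex.exp (-(2 * t)) * (D t : ℂ) with hf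
  have hfi : Integrable f := by
    rw [hf, integrable_indicator_iff measurableSet_Ioi]
    exact hintC 2 (by simp [hU])
  have hF : FourierTransform.fourier f = 0 := by
    ext ξ
    rw [Real.fourier_eq' ]
    have h1 := hall (show ((2:ℂ) + 2 * π * ξ * Complex.I) ∈ U by simp [hU])
    simp only [hH, Pi.zero_apply] at h1
    rw [Pi.zero_apply, ← h1, ← integral_indicator measurableSet_Ioi]
    congr 1
    ext t
    by_cases ht : t ∈ Ioi (0:ℝ)
    · simp only [hf, indicator_of_mem ht, smul_eq_mul]
      rw [← mul_assoc, ← Complex.exp_add]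
      congr 2
      simp
      ring
    · simp [hf, indicator_of_notMem ht]
  intro t ht
  have hcont : ContinuousAt f t := by
    have h1 : ContinuousAt (fun t : ℝ => Complex.exp (-(2 * t)) * (D t : ℂ)) t := by
      refine ContinuousAt.mul (by fun_prop) ?_
      exact Complex.continuous_ofReal.continuousAt.comp (hc.continuousAt (Ioi_mem_nhds ht))
    refine h1.congr ?_
    filter_upwards [Ioi_mem_nhds ht] with s hs
    rw [hf, indicator_of_mem hs]
  have hinv := hfi.fourierInv_fourier_eq (by rw [hF]; exact integrable_zero _ _ _) hcont
  rw [hF] at hinv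
  have h0 : f t = 0 := by
    rw [← hinv, Real.fourierInv_eq']
    simp
  rw [hf, indicator_of_mem (show t ∈ Ioi (0:ℝ) from ht)] at h0
  simpa using h0

lemma ml_eq_specG {ν : ℝ} (hν : ν ∈ Set.Ioo (0:ℝ) 1) {t : ℝ} (ht : 0 < t) :
    mittagLeffler ν (-t ^ ν) = specG ν t := by
  have hc := ml_cont hν.1
  have hr : Continuous fun t : ℝ => t ^ ν := Real.continuous_rpow_const hν.1.le
  refine sub_eq_zero.1 (laplace_unique (D := fun t => mittagLeffler ν (-t ^ ν) - specG ν t)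
    ?_ ?_ ?_ t ht)
  · exact (hc.comp hr.neg).continuousOn.sub (specG_cont hν)
  · intro p hp
    simp_rw [mul_sub]
    exact (ml_integrable hν.1 hp).sub (specG_integrable hν (by linarith))
  · intro p hp
    simp_rw [mul_sub]
    rw [integral_sub (ml_integrable hν.1 hp) (specG_integrable hν (by linarith)),
      specG_laplace hν (by linarith)]
    have := ml_laplace hν.1 hp (ε := -1) (by simp)
    simp only [neg_one_mul, sub_neg_eq_add] at this
    rw [this, sub_self]

/-- integrand of the n-th derivative -/
noncomputable def cmI (ν : ℝ) (n : ℕ) (t x : ℝ) : ℝ :=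
  specK ν x * (∏ i ∈ Finset.range n, (Real.exp x + i)) * (1 + t) ^ (-Real.exp x - n)

/-- (signed) n-th derivative -/
noncomputable def cmD (ν : ℝ) (n : ℕ) (t : ℝ) : ℝ := ∫ x : ℝ, cmI ν n t x

lemma cmI_nonneg {ν : ℝ} (hν : ν ∈ Set.Ioo (0:ℝ) 1) (n : ℕ) {t : ℝ} (ht : 0 < t) (x : ℝ) :
    0 ≤ cmI ν n t x := by
  have := specK_nonneg hν x
  unfold cmI
  positivity

lemma cmI_meas {ν : ℝ} (hν : ν ∈ Set.Ioo (0:ℝ) 1) (n : ℕ) {t : ℝ} (ht : 0 < t) :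
    AEStronglyMeasurable (cmI ν n t) volume := by
  have := specK_cont hν
  refine Continuous.aestronglyMeasurable ?_
  unfold cmI
  refine Continuous.mul (by fun_prop) ?_
  exact Continuous.rpow continuous_const (by fun_prop) fun x => Or.inl (by positivity)

lemma cmI_int {ν : ℝ} (hν : ν ∈ Set.Ioo (0:ℝ) 1) (n : ℕ) {t : ℝ} (ht : 0 < t) :
    Integrable (cmI ν n t) := by
  set l := Real.log (1 + t) with hl
  have hl0 : 0 < l := Real.log_pos (by linarith)
  refine ((specK_integrable hν).mul_const (n.factorial / l ^ n)).mono' (cmI_meas hν n ht)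
    (ae_of_all _ fun x => ?_)
  rw [Real.norm_of_nonneg (cmI_nonneg hν n ht x)]
  unfold cmI
  rw [mul_assoc]
  refine mul_le_mul_of_nonneg_left ?_ (specK_nonneg hν x)
  have hx := Real.exp_pos x
  set r := Real.exp x
  have h1 : ∏ i ∈ Finset.range n, (r + i) ≤ (r + n) ^ n := by
    calc ∏ i ∈ Finset.range n, (r + i) ≤ ∏ i ∈ Finset.range n, (r + n) := by
          refine Finset.prod_le_prod (fun i _ => by positivity) fun i hi => ?_
          have : (i : ℝ) ≤ n := by exact_mod_cast (Finset.mem_range.1 hi).le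
          linarith
      _ = _ := by simp
  have h2 := Real.pow_div_factorial_le_exp (l * (r + n)) (by positivity) n
  have h3 : (1 + t) ^ (-r - n) = (Real.exp (l * (r + n)))⁻¹ := by
    rw [Real.rpow_def_of_pos (by linarith), ← Real.exp_neg]; congr 1; ring
  have hf : (0:ℝ) < n.factorial := by positivity
  rw [h3, ← div_eq_mul_inv, div_le_div_iff₀ (Real.exp_pos _) (by positivity)]
  rw [div_le_iff₀ hf, mul_pow] at h2
  calc (∏ i ∈ Finset.range n, (r + i)) * l ^ n ≤ (r + n) ^ n * l ^ n := by gcongr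
    _ ≤ _ := by linarith

lemma cmD_deriv {ν : ℝ} (hν : ν ∈ Set.Ioo (0:ℝ) 1) (n : ℕ) {t : ℝ} (ht : 0 < t) :
    HasDerivAt (cmD ν n) (-cmD ν (n + 1) t) t := by
  have ht2 : 0 < t / 2 := by linarith
  have key := hasDerivAt_integral_of_dominated_loc_of_deriv_le (μ := (volume : Measure ℝ))
    (F := cmI ν n) (F' := fun t x => -cmI ν (n + 1) t x) (x₀ := t)
    (bound := cmI ν (n + 1) (t / 2)) (Ioi_mem_nhds (show t / 2 < t by linarith))
    ?_ (cmI_int hν n ht) (cmI_meas hν (n + 1) ht).neg ?_ (cmI_int hν (n + 1) ht2) ?_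
  · have := key.2
    rw [integral_neg] at this
    exact this
  · filter_upwards [Ioi_mem_nhds ht] with s hs using cmI_meas hν n hs
  · refine ae_of_all _ fun x s hs => ?_
    have hs : t / 2 < s := hs
    rw [norm_neg, Real.norm_of_nonneg (cmI_nonneg hν (n + 1) (by linarith) x)]
    unfold cmI
    have := specK_nonneg hν x
    refine mul_le_mul_of_nonneg_left ?_ (by positivity)
    refine Real.rpow_le_rpow_of_nonpos (by linarith) (by linarith) ?_
    have := Real.exp_pos x
    push_cast
    have : (0:ℝ) ≤ n := by positivity
    linarith
  · refine ae_of_all _ fun x s hs => ?_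
    have hs : t / 2 < s := hs
    unfold cmI
    have h1 : HasDerivAt (fun s : ℝ => 1 + s) 1 s := (hasDerivAt_id s).const_add 1
    have h2 := (h1.rpow_const (p := -Real.exp x - n) (Or.inl (by linarith))).const_mul
      (specK ν x * (∏ i ∈ Finset.range n, (Real.exp x + i)))
    refine h2.congr_deriv ?_
    rw [Finset.prod_range_succ]
    push_cast
    have : -Real.exp x - (n + 1 : ℝ) = -Real.exp x - n - 1 := by ring
    rw [this]
    ring

lemma cmD_contDiff {ν : ℝ} (hν : ν ∈ Set.Ioo (0:ℝ) 1) (m : ℕ) :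
    ∀ n : ℕ, ContDiffOn ℝ m (cmD ν n) (Ioi 0) := by
  induction m with
  | zero =>
    intro n
    rw [Nat.cast_zero, contDiffOn_zero]
    exact fun t ht => (cmD_deriv hν n ht).continuousAt.continuousWithinAt
  | succ m ih =>
    intro n
    rw [Nat.cast_succ, contDiffOn_succ_iff_deriv_of_isOpen isOpen_Ioi]
    refine ⟨fun t ht => (cmD_deriv hν n ht).differentiableAt.differentiableWithinAt, by simp, ?_⟩
    exact (ih (n + 1)).neg.congr fun t ht => (cmD_deriv hν n ht).deriv

lemma sigma_eq {ν : ℝ} (hν : ν ∈ Set.Ioo (0:ℝ) 1) {t : ℝ} (ht : 0 < t) :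
    mittagLeffler ν (-(Real.log (1 + t)) ^ ν) = cmD ν 0 t := by
  rw [ml_eq_specG hν (Real.log_pos (by linarith))]
  unfold specG cmD cmI
  congr 1
  ext x
  rw [Real.rpow_def_of_pos (by linarith : 0 < 1 + t)]
  simp

lemma sigma_iter {ν : ℝ} (hν : ν ∈ Set.Ioo (0:ℝ) 1) (n : ℕ) : ∀ t : ℝ, 0 < t →
    iteratedDeriv n (fun t : ℝ => mittagLeffler ν (-(Real.log (1 + t)) ^ ν)) t =
      (-1) ^ n * cmD ν n t := by
  induction n with
  | zero => intro t ht; simp [sigma_eq hν ht]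
  | succ n ih =>
    intro t ht
    rw [iteratedDeriv_succ]
    have : iteratedDeriv n (fun t : ℝ => mittagLeffler ν (-(Real.log (1 + t)) ^ ν)) =ᶠ[𝓝 t]
        fun t => (-1) ^ n * cmD ν n t := by
      filter_upwards [Ioi_mem_nhds ht] with s hs using ih s hs
    rw [this.deriv_eq, ((cmD_deriv hν n ht).const_mul _).deriv, pow_succ]
    ring

theorem relaxation_response_completely_monotone (ν : ℝ) (hν : ν ∈ Set.Ioo (0:ℝ) 1) :
    ContDiffOn ℝ (⊤ : ℕ∞) (fun t : ℝ => mittagLeffler ν (-(Real.log (1 + t)) ^ ν))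
      (Set.Ioi 0) ∧
    ∀ n : ℕ, ∀ t : ℝ, 0 < t →
      0 ≤ (-1 : ℝ) ^ n *
        iteratedDeriv n (fun t : ℝ => mittagLeffler ν (-(Real.log (1 + t)) ^ ν)) t := by
  refine ⟨?_, fun n t ht => ?_⟩
  · rw [contDiffOn_infty]
    exact fun m => (cmD_contDiff hν m 0).congr fun t ht => sigma_eq hν ht
  · rw [sigma_iter hν n t ht, ← mul_assoc, ← mul_pow]
    simp only [mul_neg, mul_one, neg_neg, one_pow, one_mul]
    exact integral_nonneg fun x => cmI_nonneg hν n ht x
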